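/- arXiv:1205.1348 — 2 statements merged into one kernel-verified Lean document; each statement's English description precedes it below -/
import Mathlib

section
/- For every even integer k with 2 ≤ k ≤ 2n, the depth of S/I^k is equal to 1. -/
open MvPolynomial

noncomputable section

/-- The depth of a module `M` with respect to an ideal `J`: the supremum of the lengths of
`M`-regular sequences consisting of elements of `J`. -/
noncomputable def depthWrt {R : Type*} [CommRing R] (J : Ideal R)
    (M : Type*) [AddCommGroup M] [Module R M] : ℕ∞ :=
  sSup {k : ℕ∞ | ∃ rs : List R, (rs.length : ℕ∞) = k ∧ (∀ r ∈ rs, r ∈ J) ∧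
    RingTheory.Sequence.IsRegular M rs}

/-- The type of the `2n+4` variables `a, b, c, d, x₁, y₁, …, xₙ, yₙ`. -/
abbrev Vars (n : ℕ) : Type := Fin 4 ⊕ Fin n ⊕ Fin n

variable (K : Type*) [Field K] (n : ℕ)

/-- The variable `a`. -/
def va : MvPolynomial (Vars n) K := X (Sum.inl 0)
/-- The variable `b`. -/
def vb : MvPolynomial (Vars n) K := X (Sum.inl 1)
/-- The variable `c`. -/
def vc : MvPolynomial (Vars n) K := X (Sum.inl 2)
/-- The variable `d`. -/
def vd : MvPolynomial (Vars n) K := X (Sum.inl 3)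
/-- The variable `xᵢ` (for `i = 0, …, n-1` corresponding to `x₁, …, xₙ`). -/
def vx (i : Fin n) : MvPolynomial (Vars n) K := X (Sum.inr (Sum.inl i))
/-- The variable `yᵢ` (for `i = 0, …, n-1` corresponding to `y₁, …, yₙ`). -/
def vy (i : Fin n) : MvPolynomial (Vars n) K := X (Sum.inr (Sum.inr i))

/-- The monomial ideal
`I = (a⁶, a⁵b, ab⁵, b⁶, a⁴b⁴c, a⁴b⁴d, a⁴x₁y₁², b⁴x₁²y₁, …, a⁴xₙyₙ², b⁴xₙ²yₙ)`. -/
def idealI : Ideal (MvPolynomial (Vars n) K) :=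
  Ideal.span
    ({va K n ^ 6, va K n ^ 5 * vb K n, va K n * vb K n ^ 5, vb K n ^ 6,
      va K n ^ 4 * vb K n ^ 4 * vc K n, va K n ^ 4 * vb K n ^ 4 * vd K n} ∪
     Set.range (fun i => va K n ^ 4 * vx K n i * vy K n i ^ 2) ∪
     Set.range (fun i => vb K n ^ 4 * vx K n i ^ 2 * vy K n i))

/-- The graded maximal ideal `m = (a,b,c,d,x₁,y₁,…,xₙ,yₙ)`. -/
def mMax : Ideal (MvPolynomial (Vars n) K) := Ideal.span (Set.range X)

/-- Index type of the generators. -/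
abbrev GIdx (n : ℕ) : Type := Fin 6 ⊕ Fin n ⊕ Fin n

/-- exponents of the generators -/
def gexp : GIdx n → (Vars n →₀ ℕ)
  | Sum.inl 0 => Finsupp.single (Sum.inl 0) 6
  | Sum.inl 1 => Finsupp.single (Sum.inl 0) 5 + Finsupp.single (Sum.inl 1) 1
  | Sum.inl 2 => Finsupp.single (Sum.inl 0) 1 + Finsupp.single (Sum.inl 1) 5
  | Sum.inl 3 => Finsupp.single (Sum.inl 1) 6
  | Sum.inl 4 => Finsupp.single (Sum.inl 0) 4 + Finsupp.single (Sum.inl 1) 4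
      + Finsupp.single (Sum.inl 2) 1
  | Sum.inl 5 => Finsupp.single (Sum.inl 0) 4 + Finsupp.single (Sum.inl 1) 4
      + Finsupp.single (Sum.inl 3) 1
  | Sum.inr (Sum.inl i) => Finsupp.single (Sum.inl 0) 4
      + Finsupp.single (Sum.inr (Sum.inl i)) 1 + Finsupp.single (Sum.inr (Sum.inr i)) 2
  | Sum.inr (Sum.inr i) => Finsupp.single (Sum.inl 1) 4
      + Finsupp.single (Sum.inr (Sum.inl i)) 2 + Finsupp.single (Sum.inr (Sum.inr i)) 1

lemma idealI_eq : idealI K n =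
    Ideal.span ((fun s => monomial s (1 : K)) '' Set.range (gexp n)) := by
  unfold idealI
  rw [← Set.range_comp]
  congr 1
  ext p
  simp only [Set.mem_union, Set.mem_insert_iff, Set.mem_singleton_iff, Set.mem_range,
    Function.comp, Sum.exists, Fin.exists_fin_succ]
  simp [va, vb, vc, vd, vx, vy, X, monomial_pow, monomial_mul, gexp, eq_comm, or_assoc]

lemma idealI_pow_eq (k : ℕ) : idealI K n ^ k =
    Ideal.span ((fun s => monomial s (1 : K)) ''
      {w | ∃ c : GIdx n → ℕ, ∑ i, c i = k ∧ ∑ i, c i • gexp n i = w}) := by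
  induction k with
  | zero =>
    rw [pow_zero, Ideal.one_eq_top, eq_comm, Ideal.eq_top_iff_one]
    refine Ideal.subset_span ⟨0, ⟨0, by simp, by simp⟩, by simp⟩
  | succ k ih =>
    rw [pow_succ, ih, idealI_eq, Ideal.span_mul_span']
    congr 1
    ext p
    simp only [Set.mem_mul, Set.mem_image, Set.mem_ofPred_eq, Set.mem_range]
    constructor
    · rintro ⟨_, ⟨_, ⟨c, hc, rfl⟩, rfl⟩, _, ⟨_, ⟨i, rfl⟩, rfl⟩, rfl⟩
      refine ⟨_, ⟨c + Pi.single i 1, ?_, rfl⟩, ?_⟩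
      · simp [Finset.sum_add_distrib, hc]
      · simp only [monomial_mul, Pi.add_apply, add_smul, Finset.sum_add_distrib]
        simp [Pi.single_apply]
    · rintro ⟨_, ⟨c, hc, rfl⟩, rfl⟩
      obtain ⟨i, hi⟩ : ∃ i, c i ≠ 0 := by
        by_contra! h
        simp [h] at hc
      have hci : c = (c - Pi.single i 1) + Pi.single i 1 := by
        ext j
        by_cases hj : j = i
        · subst hj; simp; omega
        · simp [hj]
      refine ⟨_, ⟨_, ⟨c - Pi.single i 1, ?_, rfl⟩, rfl⟩, _, ⟨_, ⟨i, rfl⟩, rfl⟩, ?_⟩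
      · rw [hci] at hc
        simp only [Pi.add_apply, Finset.sum_add_distrib] at hc
        simpa using hc
      · conv_rhs => rw [hci]
        simp only [monomial_mul, Pi.add_apply, add_smul, Finset.sum_add_distrib]
        simp [Pi.single_apply]

/-- Combinatorial membership of a monomial in `I ^ k`. -/
def Mem (k : ℕ) (w : Vars n → ℕ) : Prop :=
  ∃ (p1 p2 p3 p4 q1 q2 : ℕ) (s t : Fin n → ℕ),
    p1 + p2 + p3 + p4 + q1 + q2 + ∑ i, s i + ∑ i, t i = k ∧
    6 * p1 + 5 * p2 + p3 + 4 * q1 + 4 * q2 + 4 * ∑ i, s i ≤ w (Sum.inl 0) ∧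
    p2 + 5 * p3 + 6 * p4 + 4 * q1 + 4 * q2 + 4 * ∑ i, t i ≤ w (Sum.inl 1) ∧
    q1 ≤ w (Sum.inl 2) ∧ q2 ≤ w (Sum.inl 3) ∧
    (∀ i, s i + 2 * t i ≤ w (Sum.inr (Sum.inl i))) ∧
    (∀ i, 2 * s i + t i ≤ w (Sum.inr (Sum.inr i)))

lemma gsum_le_iff (c : GIdx n → ℕ) (w : Vars n →₀ ℕ) :
    ∑ i, c i • gexp n i ≤ w ↔
      6 * c (Sum.inl 0) + 5 * c (Sum.inl 1) + c (Sum.inl 2) + 4 * c (Sum.inl 4)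
        + 4 * c (Sum.inl 5) + 4 * ∑ i, c (Sum.inr (Sum.inl i)) ≤ w (Sum.inl 0) ∧
      c (Sum.inl 1) + 5 * c (Sum.inl 2) + 6 * c (Sum.inl 3) + 4 * c (Sum.inl 4)
        + 4 * c (Sum.inl 5) + 4 * ∑ i, c (Sum.inr (Sum.inr i)) ≤ w (Sum.inl 1) ∧
      c (Sum.inl 4) ≤ w (Sum.inl 2) ∧ c (Sum.inl 5) ≤ w (Sum.inl 3) ∧
      (∀ i, c (Sum.inr (Sum.inl i)) + 2 * c (Sum.inr (Sum.inr i)) ≤ w (Sum.inr (Sum.inl i))) ∧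
      (∀ i, 2 * c (Sum.inr (Sum.inl i)) + c (Sum.inr (Sum.inr i)) ≤ w (Sum.inr (Sum.inr i))) := by
  rw [Finsupp.le_def]
  simp only [Sum.forall, Fin.forall_fin_succ, Fintype.sum_sum_type, Fin.sum_univ_succ,
    Finsupp.add_apply, Finsupp.finsetSum_apply, Finsupp.smul_apply, smul_eq_mul]
  simp [gexp, Finsupp.single_apply, Finset.mul_sum, mul_comm, and_assoc, add_assoc]

lemma mem_iff (k : ℕ) (p : MvPolynomial (Vars n) K) :
    p ∈ idealI K n ^ k ↔ ∀ w ∈ p.support, Mem n k w := by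
  rw [idealI_pow_eq, mem_ideal_span_monomial_image]
  refine forall₂_congr fun w _ => ?_
  constructor
  · rintro ⟨_, ⟨c, hc, rfl⟩, h⟩
    rw [gsum_le_iff] at h
    refine ⟨_, _, _, _, _, _, _, _, ?_, h⟩
    rw [← hc]
    simp [Fin.sum_univ_succ]
    ring!
  · rintro ⟨p1, p2, p3, p4, q1, q2, s, t, hk, h⟩
    refine ⟨_, ⟨Sum.elim ![p1, p2, p3, p4, q1, q2] (Sum.elim s t), ?_, rfl⟩, ?_⟩
    · rw [← hk]
      simp [Fin.sum_univ_succ]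
      ring
    · rw [gsum_le_iff]
      simpa using h

lemma sum_upd (f : Fin n → ℕ) (i : Fin n) (x : ℕ) :
    ∑ j, Function.update f i x j + f i = ∑ j, f j + x := by
  rw [Finset.sum_update_of_mem (Finset.mem_univ i),
    ← Finset.add_sum_erase Finset.univ f (Finset.mem_univ i), Finset.sdiff_singleton_eq_erase]
  omega

lemma mem_reduce {k : ℕ} {w : Vars n → ℕ} (hw : ¬ Mem n k w) {p1 p2 p3 p4 q1 q2 : ℕ}
    {s t : Fin n → ℕ}
    (hk : p1 + p2 + p3 + p4 + q1 + q2 + ∑ i, s i + ∑ i, t i = k)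
    (ha : 6 * p1 + 5 * p2 + p3 + 4 * q1 + 4 * q2 + 4 * ∑ i, s i ≤ w (Sum.inl 0))
    (hb : p2 + 5 * p3 + 6 * p4 + 4 * q1 + 4 * q2 + 4 * ∑ i, t i ≤ w (Sum.inl 1))
    (hx : ∀ i, s i + 2 * t i ≤ w (Sum.inr (Sum.inl i)))
    (hy : ∀ i, 2 * s i + t i ≤ w (Sum.inr (Sum.inr i))) :
    p1 + p2 + p3 + p4 = 0 ∧ q1 + q2 = 1 := by
  have key : ∀ r1 r2 r3 r4 : ℕ, r1 + r2 + r3 + r4 = p1 + p2 + p3 + p4 + q1 + q2 →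
      6 * r1 + 5 * r2 + r3 ≤ 6 * p1 + 5 * p2 + p3 + 4 * q1 + 4 * q2 →
      r2 + 5 * r3 + 6 * r4 ≤ p2 + 5 * p3 + 6 * p4 + 4 * q1 + 4 * q2 → False := by
    intro r1 r2 r3 r4 h1 h2 h3
    exact hw ⟨r1, r2, r3, r4, 0, 0, s, t, by omega, by omega, by omega, by omega, by omega,
      hx, hy⟩
  obtain ⟨j, hj | hj⟩ := Nat.even_or_odd' (q1 + q2)
  · exact (key (p1 + j) p2 (p3 + j) p4 (by omega) (by omega) (by omega)).elim
  · rcases Nat.eq_zero_or_pos j with h0 | h0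
    · refine ⟨?_, by omega⟩
      by_contra hne
      have : 0 < p1 ∨ 0 < p2 ∨ 0 < p3 ∨ 0 < p4 := by omega
      rcases this with h | h | h | h
      · exact key (p1 - 1) (p2 + 2) p3 p4 (by omega) (by omega) (by omega)
      · exact key (p1 + 1) (p2 - 1) (p3 + 1) p4 (by omega) (by omega) (by omega)
      · exact key p1 (p2 + 1) (p3 - 1) (p4 + 1) (by omega) (by omega) (by omega)
      · exact key p1 p2 (p3 + 2) (p4 - 1) (by omega) (by omega) (by omega)
    · exact (key (p1 + j + 1) p2 (p3 + j - 1) (p4 + 1) (by omega) (by omega) (by omega)).elim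

/-- If every one of `c, xᵢ, yᵢ` kills a monomial up to a power, `k` even, then it is in `I ^ k`. -/
lemma mem_of_forall {k : ℕ} (hk : Even k) (w : Vars n → ℕ)
    (h : ∀ v : Vars n, v ≠ Sum.inl 0 → v ≠ Sum.inl 1 → v ≠ Sum.inl 3 →
      ∃ N, Mem n k (Function.update w v N)) : Mem n k w := by
  by_contra hw
  obtain ⟨N, p1, p2, p3, p4, q1, q2, s, t, e, ha, hb, hc, hd, hx, hy⟩ :=
    h (Sum.inl 2) (by simp) (by simp) (by simp)
  simp only [ne_eq, Sum.inl.injEq, Fin.reduceEq, not_false_eq_true, Function.update_of_ne,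
    reduceCtorEq] at ha hb hd hx hy
  obtain ⟨hp, hq⟩ := mem_reduce n hw e ha hb hx hy
  set σ := ∑ i, s i with hσ
  set τ := ∑ i, t i with hτ
  have A1 : w (Sum.inl 0) = 4 * σ + 4 := by
    by_contra hne
    exact hw ⟨0, 1, 0, 0, 0, 0, s, t, by omega, by omega, by omega, by omega, by omega, hx, hy⟩
  have B1 : w (Sum.inl 1) = 4 * τ + 4 := by
    by_contra hne
    exact hw ⟨0, 0, 1, 0, 0, 0, s, t, by omega, by omega, by omega, by omega, by omega, hx, hy⟩
  obtain ⟨m, hm⟩ := hk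
  have hne : σ < τ ∨ τ < σ := by omega
  rcases hne with hlt | hlt
  · obtain ⟨i, -, hi⟩ := Finset.exists_lt_of_sum_lt hlt
    have hxi := hx i
    have hyi := hy i
    have t1 : t i = 1 := by
      by_contra hne
      have e1 := sum_upd n s i (s i + 1)
      have e2 := sum_upd n t i (t i - 2)
      refine hw ⟨0, 0, 0, 2, 0, 0, Function.update s i (s i + 1), Function.update t i (t i - 2),
        by omega, by omega, by omega, by omega, by omega, ?_, ?_⟩
      all_goals
        intro j
        by_cases hj : j = i
        · subst hj; simp; omega
        · simp [hj, hx, hy]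
    have y1 : w (Sum.inr (Sum.inr i)) = 1 := by
      by_contra hne
      have e1 := sum_upd n s i 1
      have e2 := sum_upd n t i 0
      refine hw ⟨0, 0, 0, 1, 0, 0, Function.update s i 1, Function.update t i 0,
        by omega, by omega, by omega, by omega, by omega, ?_, ?_⟩
      all_goals
        intro j
        by_cases hj : j = i
        · subst hj; simp; omega
        · simp [hj, hx, hy]
    obtain ⟨N, r1, r2, r3, r4, u1, u2, s', t', e', ha', hb', hc', hd', hx', hy'⟩ :=
      h (Sum.inr (Sum.inl i)) (by simp) (by simp) (by simp)
    simp only [ne_eq, not_false_eq_true, Function.update_of_ne,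
      reduceCtorEq, Sum.inr.injEq] at ha' hb' hc' hd' hy'
    refine hw ⟨_, _, _, _, _, _, _, _, e', ha', hb', hc', hd', ?_, hy'⟩
    intro j
    by_cases hj : j = i
    · subst hj
      have := hy' j
      omega
    · have := hx' j
      simpa [Function.update_apply, hj] using this
  · obtain ⟨i, -, hi⟩ := Finset.exists_lt_of_sum_lt hlt
    have hxi := hx i
    have hyi := hy i
    have t1 : s i = 1 := by
      by_contra hne
      have e1 := sum_upd n s i (s i - 2)
      have e2 := sum_upd n t i (t i + 1)
      refine hw ⟨2, 0, 0, 0, 0, 0, Function.update s i (s i - 2), Function.update t i (t i + 1),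
        by omega, by omega, by omega, by omega, by omega, ?_, ?_⟩
      all_goals
        intro j
        by_cases hj : j = i
        · subst hj; simp; omega
        · simp [hj, hx, hy]
    have y1 : w (Sum.inr (Sum.inl i)) = 1 := by
      by_contra hne
      have e1 := sum_upd n s i 0
      have e2 := sum_upd n t i 1
      refine hw ⟨1, 0, 0, 0, 0, 0, Function.update s i 0, Function.update t i 1,
        by omega, by omega, by omega, by omega, by omega, ?_, ?_⟩
      all_goals
        intro j
        by_cases hj : j = i
        · subst hj; simp; omega
        · simp [hj, hx, hy]
    obtain ⟨N, r1, r2, r3, r4, u1, u2, s', t', e', ha', hb', hc', hd', hx', hy'⟩ :=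
      h (Sum.inr (Sum.inr i)) (by simp) (by simp) (by simp)
    simp only [ne_eq, not_false_eq_true, Function.update_of_ne,
      reduceCtorEq, Sum.inr.injEq] at ha' hb' hc' hd' hx'
    refine hw ⟨_, _, _, _, _, _, _, _, e', ha', hb', hc', hd', hx', ?_⟩
    intro j
    by_cases hj : j = i
    · subst hj
      have := hx' j
      omega
    · have := hy' j
      simpa [Function.update_apply, hj] using this

/-- the exponent vector of the witness; `z` is the exponent of `y_m`, `q` that of `c`. -/
def wit (m q z : ℕ) : Vars n → ℕ
  | Sum.inl 0 => 4 * m + 4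
  | Sum.inl 1 => 4 * m
  | Sum.inl 2 => q
  | Sum.inl 3 => 0
  | Sum.inr (Sum.inl i) => if i.val + 1 < m then 3 else 1
  | Sum.inr (Sum.inr i) => if i.val + 1 < m then 3 else if i.val + 1 = m then z else 1

lemma sum_ind (r : ℕ) (hr : r ≤ n) : ∑ i : Fin n, (if i.val < r then 1 else 0) = r := by
  rw [Finset.sum_boole, Fin.card_filter_val_lt]
  simp [hr]

lemma not_mem_wit (m : ℕ) (hm : 1 ≤ m) (hn : m ≤ n) : ¬ Mem n (2 * m) (wit n m 0 2) := by
  rintro ⟨p1, p2, p3, p4, q1, q2, s, t, e, ha, hb, hc, hd, hx, hy⟩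
  simp only [wit] at ha hb hc hd hx hy
  have hs : ∑ i, s i ≤ m := by
    refine le_trans (Finset.sum_le_sum fun i _ => ?_) (sum_ind n m hn).le
    have := hx i
    have := hy i
    split_ifs at * <;> omega
  have ht : ∑ i, t i ≤ m - 1 := by
    refine le_trans (Finset.sum_le_sum fun i _ => ?_) (sum_ind n (m - 1) (by omega)).le
    have := hx i
    have := hy i
    split_ifs at * <;> omega
  generalize ∑ i, s i = S at *
  generalize ∑ i, t i = T at *
  clear hx hy
  have h2 : p1 + p2 + p3 + p4 ≤ 2 := by omega
  have i1 : p1 ≤ 2 := by omega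
  have i2 : p2 ≤ 2 := by omega
  have i3 : p3 ≤ 2 := by omega
  interval_cases p1 <;> interval_cases p2 <;> interval_cases p3 <;> omega

lemma not_mem_wit' (m : ℕ) (hm : 1 ≤ m) (hn : m ≤ n) : ¬ Mem n (2 * m) (wit n m 1 1) := by
  rintro ⟨p1, p2, p3, p4, q1, q2, s, t, e, ha, hb, hc, hd, hx, hy⟩
  simp only [wit] at ha hb hc hd hx hy
  have hs : ∑ i, s i ≤ m - 1 := by
    refine le_trans (Finset.sum_le_sum fun i _ => ?_) (sum_ind n (m - 1) (by omega)).le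
    have := hx i
    have := hy i
    split_ifs at * <;> omega
  have ht : ∑ i, t i ≤ m - 1 := by
    refine le_trans (Finset.sum_le_sum fun i _ => ?_) (sum_ind n (m - 1) (by omega)).le
    have := hx i
    have := hy i
    split_ifs at * <;> omega
  generalize ∑ i, s i = S at *
  generalize ∑ i, t i = T at *
  clear hx hy
  have h2 : p1 + p2 + p3 + p4 ≤ 2 := by omega
  have i1 : p1 ≤ 2 := by omega
  have i2 : p2 ≤ 2 := by omega
  have i3 : p3 ≤ 2 := by omega
  interval_cases p1 <;> interval_cases p2 <;> interval_cases p3 <;> omega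

lemma mem_wit (m : ℕ) (hm : 1 ≤ m) (hn : m ≤ n) (v : Vars n)
    (hv : v ≠ Sum.inr (Sum.inr ⟨m - 1, by omega⟩)) :
    Mem n (2 * m) (wit n m 0 2 + Pi.single v 1) := by
  have hs := sum_ind n m hn
  have ht := sum_ind n (m - 1) (by omega)
  set s : Fin n → ℕ := fun i => if i.val < m then 1 else 0 with hsd
  set t : Fin n → ℕ := fun i => if i.val < m - 1 then 1 else 0 with htd
  have hx : ∀ i, s i + 2 * t i ≤ wit n m 0 2 (Sum.inr (Sum.inl i)) := by
    intro i; simp only [wit, s, t]; split_ifs <;> omega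
  have hy : ∀ i, 2 * s i + t i ≤ wit n m 0 2 (Sum.inr (Sum.inr i)) := by
    intro i; simp only [wit, s, t]; split_ifs <;> omega
  have hs' : ∑ i, s i = m := hs
  have ht' : ∑ i, t i = m - 1 := ht
  have hxv : ∀ i, s i + 2 * t i ≤ (wit n m 0 2 + Pi.single v 1 : Vars n → ℕ) (Sum.inr (Sum.inl i)) :=
    fun i => (hx i).trans (Nat.le_add_right _ _)
  have hyv : ∀ i, 2 * s i + t i ≤ (wit n m 0 2 + Pi.single v 1 : Vars n → ℕ) (Sum.inr (Sum.inr i)) :=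
    fun i => (hy i).trans (Nat.le_add_right _ _)
  rcases v with v | i | i
  · fin_cases v
    · exact ⟨0, 1, 0, 0, 0, 0, s, t, by omega, by simp [wit]; omega, by simp [wit]; omega,
        by simp, by simp, hxv, hyv⟩
    · exact ⟨0, 0, 1, 0, 0, 0, s, t, by omega, by simp [wit]; omega, by simp [wit]; omega,
        by simp, by simp, hxv, hyv⟩
    · exact ⟨0, 0, 0, 0, 1, 0, s, t, by omega, by simp [wit]; omega, by simp [wit]; omega,
        by simp, by simp, hxv, hyv⟩
    · exact ⟨0, 0, 0, 0, 0, 1, s, t, by omega, by simp [wit]; omega, by simp [wit]; omega,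
        by simp, by simp, hxv, hyv⟩
  · have e1 := sum_upd n s i 0
    have e2 := sum_upd n t i (t i + 1)
    have h1 : s i = if i.val < m then 1 else 0 := rfl
    have h2 : t i = if i.val < m - 1 then 1 else 0 := rfl
    have h3 := hx i
    have h4 := hy i
    refine ⟨s i, 0, 0, 0, 0, 0, Function.update s i 0, Function.update t i (t i + 1),
      by omega, ?_, by simp [wit]; omega, by simp, by simp, ?_, ?_⟩
    · simp [wit]; split_ifs at h1 <;> omega
    · intro j
      by_cases hj : j = i
      · subst hj
        simp [wit]; split_ifs at * <;> omega
      · simpa [hj] using hx j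
    · intro j
      by_cases hj : j = i
      · subst hj
        simp [wit]; split_ifs at * <;> omega
      · simpa [hj] using hy j
  · have him : i.val + 1 ≠ m := by
      intro h
      apply hv
      congr 2
      ext
      simp
      omega
    have e1 := sum_upd n s i (s i + 1)
    have e2 := sum_upd n t i 0
    have h1 : s i = if i.val < m then 1 else 0 := rfl
    have h2 : t i = if i.val < m - 1 then 1 else 0 := rfl
    have h3 := hx i
    have h4 := hy i
    refine ⟨0, 0, 0, t i, 0, 0, Function.update s i (s i + 1), Function.update t i 0,
      by omega, by simp [wit]; omega, ?_, by simp, by simp, ?_, ?_⟩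
    · simp [wit]; split_ifs at h2 <;> omega
    · intro j
      by_cases hj : j = i
      · subst hj
        simp [wit]; split_ifs at * <;> omega
      · simpa [hj] using hx j
    · intro j
      by_cases hj : j = i
      · subst hj
        simp [wit, him]; split_ifs at * <;> omega
      · simpa [hj] using hy j

/-- The regular element. -/
def regEl : MvPolynomial (Vars n) K :=
  ∑ v ∈ Finset.univ.filter
    (fun v : Vars n => v ≠ Sum.inl 0 ∧ v ≠ Sum.inl 1 ∧ v ≠ Sum.inl 3), X v

lemma Mem.mono {n k : ℕ} {w w' : Vars n → ℕ} (h : Mem n k w) (hle : w ≤ w') : Mem n k w' := by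
  obtain ⟨p1, p2, p3, p4, q1, q2, s, t, e, ha, hb, hc, hd, hx, hy⟩ := h
  exact ⟨p1, p2, p3, p4, q1, q2, s, t, e, ha.trans (hle _), hb.trans (hle _), hc.trans (hle _),
    hd.trans (hle _), fun i => (hx i).trans (hle _), fun i => (hy i).trans (hle _)⟩

lemma regEl_mem {k : ℕ} (hk : Even k) (g : MvPolynomial (Vars n) K)
    (h : regEl K n * g ∈ idealI K n ^ k) : g ∈ idealI K n ^ k := by
  classical
  rw [mem_iff] at h ⊢
  by_contra! hcon
  obtain ⟨w0, hw0, hM⟩ := hcon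
  apply hM
  refine mem_of_forall n hk w0 ?_
  intro v h0 h1 h3
  by_contra! hv
  -- monomials of g not in the saturation, of maximal v-degree
  let B := g.support.filter (fun w : Vars n →₀ ℕ => ∀ N, ¬ Mem n k (Function.update (⇑w) v N))
  have hB : B.Nonempty := ⟨w0, by simp only [B, Finset.mem_filter]; exact ⟨hw0, hv⟩⟩
  obtain ⟨w, hwB, hmax⟩ := Finset.exists_max_image B (fun w => w v) hB
  simp only [B, Finset.mem_filter] at hwB hmax
  obtain ⟨hwg, hwN⟩ := hwB
  have hcoef : coeff (w + Finsupp.single v 1) (regEl K n * g) = coeff w g := by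
    rw [regEl, Finset.sum_mul, coeff_sum]
    rw [Finset.sum_eq_single v]
    · rw [mul_comm, coeff_mul_X]
    · intro v' hv' hne
      rw [mul_comm, coeff_mul_X']
      split_ifs with hs
      · by_contra hc
        set w' := w + Finsupp.single v 1 - Finsupp.single v' 1 with hw'
        have hN : ∀ N, ¬ Mem n k (Function.update (w' : Vars n → ℕ) v N) := by
          intro N hmem
          refine hwN N (hmem.mono ?_)
          intro z
          by_cases hz : z = v
          · subst hz; simp
          · simp [hz, hw', Finsupp.single_apply, Ne.symm hz]
        have := hmax w' ⟨mem_support_iff.mpr hc, hN⟩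
        simp [hw', Finsupp.single_apply, hne] at this
      · rfl
    · intro hv'
      simp [h0, h1, h3] at hv'
  have hmem := h (w + Finsupp.single v 1) (by
    rw [mem_support_iff, hcoef]; exact mem_support_iff.mp hwg)
  refine hwN (w v + 1) (hmem.mono ?_)
  intro z
  by_cases hz : z = v
  · subst hz; simp
  · simp [hz, Ne.symm hz]

lemma mMax_eq : mMax K n = RingHom.ker (constantCoeff (R := K) (σ := Vars n)) := by
  apply le_antisymm
  · rw [mMax, Ideal.span_le]
    rintro _ ⟨v, rfl⟩
    simp
  · intro p hp
    rw [mMax, ← Set.image_univ, mem_ideal_span_X_image]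
    intro m hm
    have : m ≠ 0 := by
      rintro rfl
      rw [mem_support_iff] at hm
      exact hm hp
    obtain ⟨i, hi⟩ := Finsupp.ne_iff.mp this
    exact ⟨i, Set.mem_univ _, hi⟩

lemma regEl_mem_mMax : regEl K n ∈ mMax K n :=
  Ideal.sum_mem _ fun v _ => Ideal.subset_span ⟨v, rfl⟩

lemma pow_le_mMax {k : ℕ} (hk : k ≠ 0) : idealI K n ^ k ≤ mMax K n := by
  refine (Ideal.pow_le_self hk).trans ?_
  rw [mMax_eq, idealI, Ideal.span_le]
  rintro p ((hp | ⟨i, rfl⟩) | ⟨i, rfl⟩)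
  · simp only [Set.mem_insert_iff, Set.mem_singleton_iff] at hp
    rcases hp with rfl | rfl | rfl | rfl | rfl | rfl <;> simp [va, vb, vc, vd]
  · simp [va, vb, vx, vy]
  · simp [va, vb, vx, vy]

open scoped Pointwise in
lemma regEl_regular {k : ℕ} (hk : Even k) (h0 : k ≠ 0) :
    RingTheory.Sequence.IsRegular (MvPolynomial (Vars n) K ⧸ (idealI K n) ^ k) [regEl K n] := by
  rw [RingTheory.Sequence.isRegular_cons_iff]
  refine ⟨?_, ?_⟩
  · rw [isSMulRegular_quotient_iff_mem_of_smul_mem]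
    exact fun g hg => regEl_mem K n hk g hg
  · have : Nontrivial (QuotSMulTop (regEl K n) (MvPolynomial (Vars n) K ⧸ (idealI K n) ^ k)) := by
      rw [Submodule.Quotient.nontrivial_iff]
      intro htop
      have h1 : (Submodule.Quotient.mk 1 : MvPolynomial (Vars n) K ⧸ (idealI K n) ^ k) ∈
        regEl K n • (⊤ : Submodule (MvPolynomial (Vars n) K)
          (MvPolynomial (Vars n) K ⧸ (idealI K n) ^ k)) := by rw [htop]; trivial
      obtain ⟨g, -, hg⟩ := (Submodule.mem_smul_pointwise_iff_exists _ _ _).mp h1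
      obtain ⟨g, rfl⟩ := Submodule.Quotient.mk_surjective _ g
      rw [← Submodule.Quotient.mk_smul, Submodule.Quotient.eq] at hg
      have h2 := pow_le_mMax K n h0 hg
      have h3 := regEl_mem_mMax K n
      rw [mMax_eq, RingHom.mem_ker] at h2 h3
      simp [h3] at h2
    exact RingTheory.Sequence.IsRegular.nil _ _

lemma no_two {k : ℕ} (heven : Even k) (h1 : 2 ≤ k) (h2 : k ≤ 2 * n)
    (r1 r2 : MvPolynomial (Vars n) K) (hr1 : r1 ∈ mMax K n) (hr2 : r2 ∈ mMax K n)
    (H1 : ∀ g, r1 * g ∈ idealI K n ^ k → g ∈ idealI K n ^ k)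
    (H2 : ∀ g h, r2 * g - r1 * h ∈ idealI K n ^ k → ∃ h', g - r1 * h' ∈ idealI K n ^ k) :
    False := by
  classical
  obtain ⟨m, rfl⟩ := heven.exists_two_nsmul
  rw [smul_eq_mul] at *
  have hm : 1 ≤ m := by omega
  have hn : m ≤ n := by omega
  set L := idealI K n ^ (2 * m) with hL
  let y : Vars n := Sum.inr (Sum.inr ⟨m - 1, by omega⟩)
  let e : Vars n →₀ ℕ := Finsupp.equivFunOnFinite.symm (wit n m 0 2)
  let e' : Vars n →₀ ℕ := Finsupp.equivFunOnFinite.symm (wit n m 0 1)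
  have hee : e = e' + Finsupp.single y 1 := by
    ext z
    rcases z with z | z | z
    · fin_cases z <;> simp [e, e', wit, y]
    · simp [e, e', wit, y]
    · simp only [e, e', wit, y, Finsupp.equivFunOnFinite_symm_apply_apply, Finsupp.add_apply,
        Finsupp.single_apply, Sum.inr.injEq, Fin.ext_iff]
      split_ifs <;> omega
  let u : MvPolynomial (Vars n) K := monomial e 1
  have hu : ∀ v, v ≠ y → X v * u ∈ L := by
    intro v hv
    rw [hL, mem_iff]
    intro w hw
    have : X v * u = monomial (Finsupp.single v 1 + e) 1 := by simp [X, u, monomial_mul]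
    rw [this, support_monomial, if_neg one_ne_zero, Finset.mem_singleton] at hw
    subst hw
    refine (mem_wit n m hm hn v hv).mono ?_
    intro z
    simp [e, Pi.single_apply, Finsupp.single_apply, eq_comm, add_comm]
  have hP : ∀ r ∈ mMax K n, ∃ h p, r = p + X y * h ∧ p * u ∈ L := by
    intro r hr
    refine Submodule.span_induction (p := fun r _ => ∃ h p, r = p + X y * h ∧ p * u ∈ L)
      ?_ ?_ ?_ ?_ hr
    · rintro _ ⟨v, rfl⟩
      by_cases hv : v = y
      · subst hv
        exact ⟨1, 0, by simp, by simp⟩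
      · exact ⟨0, X v, by simp, hu v hv⟩
    · exact ⟨0, 0, by simp, by simp⟩
    · rintro _ _ _ _ ⟨h, p, rfl, hp⟩ ⟨h', p', rfl, hp'⟩
      exact ⟨h + h', p + p', by ring, by rw [add_mul]; exact add_mem hp hp'⟩
    · rintro a _ _ ⟨h, p, rfl, hp⟩
      exact ⟨a * h, a * p, by simp only [smul_eq_mul]; ring,
        by rw [mul_assoc]; exact Ideal.mul_mem_left _ _ hp⟩
  obtain ⟨g1, p1, e1, hp1⟩ := hP r1 hr1
  obtain ⟨g2, p2, e2, hp2⟩ := hP r2 hr2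
  obtain ⟨g, hg⟩ := H2 (g1 * u) (g2 * u) (by
    have : r2 * (g1 * u) - r1 * (g2 * u) = g1 * (p2 * u) - g2 * (p1 * u) := by
      rw [e1, e2]; ring
    rw [this]
    exact sub_mem (Ideal.mul_mem_left _ _ hp2) (Ideal.mul_mem_left _ _ hp1))
  have hcg : X (Sum.inl 2) * g ∈ L := by
    apply H1
    have : r1 * (X (Sum.inl 2) * g) =
        g1 * (X (Sum.inl 2) * u) - X (Sum.inl 2) * (g1 * u - r1 * g) := by ring
    rw [this]
    exact sub_mem (Ideal.mul_mem_left _ _ (hu _ (by simp [y]))) (Ideal.mul_mem_left _ _ hg)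
  have hyg : X y * g - u ∈ L := by
    apply H1
    have : r1 * (X y * g - u) = - (X y * (g1 * u - r1 * g)) - p1 * u := by
      have : r1 * u = p1 * u + X y * g1 * u := by rw [e1]; ring
      linear_combination -this
    rw [this]
    exact sub_mem (neg_mem (Ideal.mul_mem_left _ _ hg)) hp1
  rw [hL, mem_iff] at hcg hyg
  have hc1 : coeff e (X y * g - u) = 0 := by
    by_contra hne
    exact not_mem_wit n m hm hn (hyg e (mem_support_iff.mpr hne))
  have hc2 : coeff e' g = 1 := by
    rw [coeff_sub, hee, mul_comm, coeff_mul_X, ← hee] at hc1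
    simpa [u, sub_eq_zero] using hc1
  have := hcg (e' + Finsupp.single (Sum.inl 2) 1) (by
    rw [mem_support_iff, mul_comm, coeff_mul_X, hc2]; exact one_ne_zero)
  refine not_mem_wit' n m hm hn (this.mono ?_)
  intro z
  rcases z with z | z | z
  · fin_cases z <;> simp [e', wit]
  · simp [e', wit]
  · simp [e', wit]

/-- For every even integer `k` with `2 ≤ k ≤ 2n`, the depth of `S/Iᵏ` equals `1`. -/
theorem depth_eq_one_of_even (k : ℕ) (heven : Even k) (h1 : 2 ≤ k) (h2 : k ≤ 2 * n) :
    depthWrt (mMax K n) (MvPolynomial (Vars n) K ⧸ (idealI K n) ^ k) = 1 := by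
  apply le_antisymm
  · apply sSup_le
    rintro _ ⟨rs, rfl, hJ, hreg⟩
    match rs, hJ, hreg with
    | [], _, _ => simp
    | [r], _, _ => simp
    | r1 :: r2 :: rs, hJ, hreg =>
      exfalso
      rw [RingTheory.Sequence.isRegular_cons_iff, RingTheory.Sequence.isRegular_cons_iff] at hreg
      obtain ⟨H1, H2, -⟩ := hreg
      rw [isSMulRegular_quotient_iff_mem_of_smul_mem] at H1 H2
      refine no_two K n heven h1 h2 r1 r2 (hJ _ (by simp)) (hJ _ (by simp)) H1 ?_
      intro g h hgh
      have := H2 (Submodule.Quotient.mk g) ((Submodule.mem_smul_pointwise_iff_exists _ _ _).mpr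
        ⟨Submodule.Quotient.mk h, trivial, by
          rw [← Submodule.Quotient.mk_smul, ← Submodule.Quotient.mk_smul, eq_comm,
            Submodule.Quotient.eq]
          exact hgh⟩)
      obtain ⟨z, -, hz⟩ := (Submodule.mem_smul_pointwise_iff_exists _ _ _).mp this
      obtain ⟨z, rfl⟩ := Submodule.Quotient.mk_surjective _ z
      rw [← Submodule.Quotient.mk_smul, eq_comm, Submodule.Quotient.eq] at hz
      exact ⟨z, hz⟩
  · apply le_sSup
    refine ⟨[regEl K n], by simp, ?_, regEl_regular K n heven (by omega)⟩
    intro r hr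
    rw [List.mem_singleton] at hr
    rw [hr]
    exact regEl_mem_mMax K n
end
end

section
/- For every integer k > 2n+1, the depth of S/I^k is equal to 2. -/
open MvPolynomial

noncomputable section

variable (K : Type*) [Field K] (n : ℕ)

theorem assoc_step {R : Type*} [CommRing R] [IsNoetherianRing R] {M : Type*} [AddCommGroup M]
    [Module R M] [Module.Finite R M] (m : Ideal R) [m.IsPrime] (Q : Ideal R) [Q.IsPrime]
    (hQm : Q ≤ m) (x : M) (hx : ∀ r, r ∈ Q ↔ r • x = 0) (f : R) (hf : f ∈ m)
    (hreg : IsSMulRegular M f) :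
    ∃ Q' : Ideal R, Q'.IsPrime ∧ Q < Q' ∧ Q' ≤ m ∧
      ∃ x' : QuotSMulTop f M, ∀ r, r ∈ Q' ↔ r • x' = 0 := by
  have hfQ : f ∉ Q := by
    intro h
    have h1 : x = 0 := hreg (by simpa using (hx f).1 h)
    exact (Ideal.IsPrime.ne_top ‹Q.IsPrime›) ((Ideal.eq_top_iff_one _).2 ((hx 1).2 (by simp [h1])))
  let M' : Submodule R M :=
    { carrier := {y | ∀ q ∈ Q, q • y = 0}
      add_mem' := by
        intro a b ha hb q hq
        rw [smul_add, ha q hq, hb q hq, add_zero]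
      zero_mem' := by intro q _; simp
      smul_mem' := by
        intro c y hy q hq
        rw [smul_comm, hy q hq, smul_zero] }
  have hM' : ∀ y, y ∈ M' ↔ ∀ q ∈ Q, q • y = 0 := fun y => Iff.rfl
  have hxM : x ∈ M' := fun q hq => (hx q).1 hq
  let N : Submodule R (QuotSMulTop f M) := M'.map (Submodule.mkQ _)
  have hann : Module.annihilator R N ≤ m := by
    intro r hr
    have h1 : ∀ y ∈ M', ∃ z ∈ M', f • z = r • y := by
      intro y hy
      have h2 := Submodule.mem_annihilator.1 hr _ (Submodule.mem_map_of_mem hy)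
      rw [← map_smul, Submodule.mkQ_apply, Submodule.Quotient.mk_eq_zero,
        Submodule.mem_smul_pointwise_iff_exists] at h2
      obtain ⟨z, -, hz⟩ := h2
      refine ⟨z, fun q hq => hreg ?_, hz⟩
      change f • q • z = f • 0
      rw [smul_comm, hz, smul_comm, hy q hq, smul_zero, smul_zero]
    let φ : Module.End R M' := r • LinearMap.id
    obtain ⟨p, hp, -, hc, h0⟩ :=
      LinearMap.exists_monic_and_natDegree_eq_and_coeff_mem_pow_and_aeval_eq_zero R φ
        (Ideal.span {f}) (by
          rintro _ ⟨y, rfl⟩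
          obtain ⟨z, hz, hzy⟩ := h1 y y.2
          have : φ y = f • (⟨z, hz⟩ : M') := by
            apply Subtype.ext
            simp [φ, hzy]
          rw [this]
          exact Submodule.smul_mem_smul (Ideal.mem_span_singleton_self f) trivial)
    have hφ : φ = algebraMap R (Module.End R M') r := by
      ext y; simp [φ]
    rw [hφ, Polynomial.aeval_algebraMap_apply] at h0
    have h3 : p.eval r ∈ Q := by
      rw [hx]
      have := congrArg (fun g : Module.End R M' => ((g ⟨x, hxM⟩ : M') : M)) h0
      simpa using this
    have h4 : p.eval r ∈ m := hQm h3
    have h5 : p.map (Ideal.Quotient.mk m) = Polynomial.X ^ p.natDegree := by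
      ext k
      rw [Polynomial.coeff_map, Polynomial.coeff_X_pow]
      split_ifs with hk
      · rw [hk, hp.coeff_natDegree, map_one]
      · rcases lt_or_gt_of_ne hk with h | h
        · rw [Ideal.Quotient.eq_zero_iff_mem]
          have h6 := Ideal.pow_le_self (by omega) (hc k)
          exact (Ideal.span_singleton_le_iff_mem (I := m)).2 hf h6
        · rw [Polynomial.coeff_eq_zero_of_natDegree_lt h, map_zero]
    have h6 : Ideal.Quotient.mk m (r ^ p.natDegree) = 0 := by
      rw [← Ideal.Quotient.eq_zero_iff_mem, ← Polynomial.eval₂_at_apply,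
        ← Polynomial.eval_map, h5] at h4
      simpa using h4
    exact Ideal.IsPrime.mem_of_pow_mem ‹m.IsPrime› _ (Ideal.Quotient.eq_zero_iff_mem.1 h6)
  obtain ⟨Q', hQ', hle⟩ := Ideal.exists_minimalPrimes_le hann
  have hass := Module.associatedPrimes.minimalPrimes_annihilator_subset_associatedPrimes R N hQ'
  obtain ⟨hprime, x', hx'⟩ := isAssociatedPrime_iff.1 hass
  have hsub : ∀ r, (r ∈ Q ∨ r = f) → r ∈ Q' := by
    intro r hr
    apply hQ'.1.2
    refine Submodule.mem_annihilator.2 ?_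
    rintro _ ⟨y, hy, rfl⟩
    rw [← map_smul]
    rcases hr with hr | rfl
    · rw [hy r hr, map_zero]
    · rw [Submodule.mkQ_apply, Submodule.Quotient.mk_eq_zero]
      exact Submodule.smul_mem_pointwise_smul _ _ _ trivial
  refine ⟨Q', hprime, ?_, hle, x', ?_⟩
  · refine lt_of_le_of_ne (fun r hr => hsub r (Or.inl hr)) ?_
    rintro rfl
    exact hfQ (hsub f (Or.inr rfl))
  · intro r
    rw [hx', Submodule.mem_colon_singleton, Submodule.mem_bot]
    rw [Subtype.ext_iff]
    rfl

theorem length_le_coheight_of_regular {R : Type*} [CommRing R] [IsNoetherianRing R]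
    (m : Ideal R) [m.IsPrime] (rs : List R) : ∀ {M : Type*} [AddCommGroup M]
    [Module R M] [Module.Finite R M] (Q : PrimeSpectrum R)
    (_ : Q.asIdeal ≤ m) (x : M) (_ : ∀ r, r ∈ Q.asIdeal ↔ r • x = 0) (_ : ∀ r ∈ rs, r ∈ m)
    (_ : RingTheory.Sequence.IsWeaklyRegular M rs),
    (rs.length : ℕ∞) ≤ Order.coheight Q := by
  induction rs with
  | nil => intros; simp
  | cons f rs ih =>
    intro M _ _ _ Q hQ x hx hm hreg
    rw [RingTheory.Sequence.isWeaklyRegular_cons_iff] at hreg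
    obtain ⟨Q', hp, hlt, hle, x', hx'⟩ := assoc_step m Q.asIdeal hQ x hx f (hm f (by simp)) hreg.1
    have h1 := ih (M := QuotSMulTop f M) ⟨Q', hp⟩ hle x' hx'
      (fun r hr => hm r (by simp [hr])) hreg.2
    have h2 : Q < ⟨Q', hp⟩ := hlt
    refine le_trans ?_ (Order.coheight_add_one_le h2)
    push_cast [List.length_cons]
    gcongr

theorem coheight_le_quot {R : Type*} [CommRing R] (P : Ideal R) (Q : PrimeSpectrum R)
    (h : P ≤ Q.asIdeal) : (Order.coheight Q : WithBot ℕ∞) ≤ ringKrullDim (R ⧸ P) := by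
  rw [ringKrullDim_quotient, Order.coheight_eq_krullDim_Ici]
  refine Order.krullDim_le_of_strictMono (fun a => ⟨a.1, ?_⟩) ?_
  · exact h.trans a.2
  · intro a b hab
    exact hab

/-- Bound for the length of weakly regular sequences. -/
theorem length_le_dim {R : Type*} [CommRing R] [IsNoetherianRing R]
    (m : Ideal R) [m.IsPrime] (rs : List R) {M : Type*} [AddCommGroup M]
    [Module R M] [Module.Finite R M] (P : Ideal R) (u : M) (hP : ∀ r ∈ P, r • u = 0)
    (hm : ∀ r, r • u = 0 → r ∈ m) (hrs : ∀ r ∈ rs, r ∈ m)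
    (hreg : RingTheory.Sequence.IsWeaklyRegular M rs) :
    ((rs.length : ℕ∞) : WithBot ℕ∞) ≤ ringKrullDim (R ⧸ P) := by
  have hann : Module.annihilator R (Submodule.span R {u}) ≤ m := by
    intro r hr
    exact hm r (Submodule.mem_annihilator.1 hr u (Submodule.mem_span_singleton_self u))
  obtain ⟨Q, hQ, hle⟩ := Ideal.exists_minimalPrimes_le hann
  have hass := Module.associatedPrimes.minimalPrimes_annihilator_subset_associatedPrimes R _ hQ
  obtain ⟨hprime, x, hx⟩ := isAssociatedPrime_iff.1 hass
  have hPQ : P ≤ Q := by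
    intro r hr
    apply hQ.1.2
    exact (Submodule.mem_annihilator_span_singleton u r).2 (hP r hr)
  have h1 := length_le_coheight_of_regular m rs (M := M) ⟨Q, hprime⟩ hle (x : M) (by
    intro r
    change r ∈ Q ↔ _
    rw [hx, Submodule.mem_colon_singleton, Submodule.mem_bot, Subtype.ext_iff]
    rfl) hrs hreg
  exact le_trans (by exact_mod_cast h1) (coheight_le_quot P ⟨Q, hprime⟩ hPQ)

/-- Generators of `I` not involving `c, d`. -/
def genL : Set (MvPolynomial (Vars n) K) :=
  {va K n ^ 6, va K n ^ 5 * vb K n, va K n * vb K n ^ 5, vb K n ^ 6} ∪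
     Set.range (fun i => va K n ^ 4 * vx K n i * vy K n i ^ 2) ∪
     Set.range (fun i => vb K n ^ 4 * vx K n i ^ 2 * vy K n i)

/-- The part of `I` not involving `c, d`. -/
def idealL : Ideal (MvPolynomial (Vars n) K) := Ideal.span (genL K n)

theorem L_a6 : va K n ^ 6 ∈ idealL K n := Ideal.subset_span (by simp [genL])
theorem L_a5b : va K n ^ 5 * vb K n ∈ idealL K n := Ideal.subset_span (by simp [genL])
theorem L_ab5 : va K n * vb K n ^ 5 ∈ idealL K n := Ideal.subset_span (by simp [genL])
theorem L_b6 : vb K n ^ 6 ∈ idealL K n := Ideal.subset_span (by simp [genL])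
theorem L_sa (i : Fin n) : va K n ^ 4 * vx K n i * vy K n i ^ 2 ∈ idealL K n :=
  Ideal.subset_span (Or.inl (Or.inr ⟨i, rfl⟩))
theorem L_sb (i : Fin n) : vb K n ^ 4 * vx K n i ^ 2 * vy K n i ∈ idealL K n :=
  Ideal.subset_span (Or.inr ⟨i, rfl⟩)

theorem mem_sq {R : Type*} [CommRing R] {L : Ideal R} {u v : R} (hu : u ∈ L) (hv : v ∈ L) (w z : R)
    (h : z = u * v * w) : z ∈ L ^ 2 := by
  rw [h, pow_two]
  exact Ideal.mul_mem_right _ _ (Ideal.mul_mem_mul hu hv)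

theorem mem_cube {R : Type*} [CommRing R] {L : Ideal R} {u v t : R} (hu : u ∈ L) (hv : v ∈ L)
    (ht : t ∈ L) (w z : R) (h : z = u * v * t * w) : z ∈ L ^ 3 := by
  rw [h, pow_succ, pow_two]
  exact Ideal.mul_mem_right _ _ (Ideal.mul_mem_mul (Ideal.mul_mem_mul hu hv) ht)

theorem prod_mem_pow_card {R ι : Type*} [CommRing R] {L : Ideal R} (s : Finset ι) (f : ι → R)
    (h : ∀ i ∈ s, f i ∈ L) : ∏ i ∈ s, f i ∈ L ^ s.card := by
  have := Ideal.prod_mem_prod (I := fun _ => L) h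
  simpa using this

open Pointwise in
theorem q_mul_mem (r : ℕ) (hr : 2 * n + 1 ≤ r) (z : MvPolynomial (Vars n) K)
    (hz : z ∈ idealL K n ^ r) : (va K n ^ 4 * vb K n ^ 4) * z ∈ idealL K n ^ (r + 1) := by
  classical
  set q := va K n ^ 4 * vb K n ^ 4 with hq
  have hle : idealL K n ^ r ≤
      Submodule.comap (LinearMap.mulLeft (MvPolynomial (Vars n) K) q) (idealL K n ^ (r + 1)) := by
    have h1 : idealL K n ^ r = Ideal.span (genL K n ^ r) := Submodule.span_pow _ _
    conv_lhs => rw [h1]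
    refine Ideal.span_le.2 ?_
    intro y hy
    obtain ⟨f, rfl⟩ := Set.mem_pow.1 hy
    rw [List.prod_ofFn]
    change q * ∏ i, (f i : MvPolynomial (Vars n) K) ∈ idealL K n ^ (r + 1)
    have hf : ∀ i, (f i : MvPolynomial (Vars n) K) ∈ idealL K n :=
      fun i => Ideal.subset_span (f i).2
    by_cases hJ : ∃ i, q * (f i : MvPolynomial (Vars n) K) ∈ idealL K n ^ 2
    · obtain ⟨i, hi⟩ := hJ
      rw [← Finset.mul_prod_erase Finset.univ _ (Finset.mem_univ i), ← mul_assoc]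
      have h2 := prod_mem_pow_card (Finset.univ.erase i)
        (fun i => (f i : MvPolynomial (Vars n) K)) (fun i _ => hf i)
      rw [Finset.card_erase_of_mem (Finset.mem_univ i), Finset.card_univ, Fintype.card_fin] at h2
      have h3 := Ideal.mul_mem_mul hi h2
      rw [← pow_add] at h3
      convert h3 using 2
      omega
    · have hsp : ∀ i, ∃ s : Fin n ⊕ Fin n, (f i : MvPolynomial (Vars n) K) =
          Sum.elim (fun i => va K n ^ 4 * vx K n i * vy K n i ^ 2)
            (fun i => vb K n ^ 4 * vx K n i ^ 2 * vy K n i) s := by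
        intro i
        have hni : q * (f i : MvPolynomial (Vars n) K) ∉ idealL K n ^ 2 := fun h => hJ ⟨i, h⟩
        rcases (f i).2 with (h | ⟨j, h⟩) | ⟨j, h⟩
        · exfalso
          apply hni
          simp only [Set.mem_insert_iff, Set.mem_singleton_iff] at h
          rcases h with h | h | h | h <;> rw [h]
          · exact mem_sq (L_a5b K n) (L_a5b K n) (vb K n ^ 2) _ (by rw [hq]; ring)
          · exact mem_sq (L_a6 K n) (L_ab5 K n) (va K n ^ 2) _ (by rw [hq]; ring)
          · exact mem_sq (L_a5b K n) (L_b6 K n) (vb K n ^ 2) _ (by rw [hq]; ring)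
          · exact mem_sq (L_ab5 K n) (L_ab5 K n) (va K n ^ 2) _ (by rw [hq]; ring)
        · exact ⟨Sum.inl j, h.symm⟩
        · exact ⟨Sum.inr j, h.symm⟩
      choose s hs using hsp
      obtain ⟨i, j, hij, hsij⟩ := Fintype.exists_ne_map_eq_of_card_lt s (by
        simp only [Fintype.card_sum, Fintype.card_fin]; omega)
      have hji : j ∈ Finset.univ.erase i := by simp [hij.symm]
      rw [← Finset.mul_prod_erase Finset.univ _ (Finset.mem_univ i),
        ← Finset.mul_prod_erase (Finset.univ.erase i) _ hji, ← mul_assoc, ← mul_assoc]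
      have h2 := prod_mem_pow_card ((Finset.univ.erase i).erase j)
        (fun i => (f i : MvPolynomial (Vars n) K)) (fun i _ => hf i)
      rw [Finset.card_erase_of_mem hji, Finset.card_erase_of_mem (Finset.mem_univ i),
        Finset.card_univ, Fintype.card_fin] at h2
      have hc : q * (f i : MvPolynomial (Vars n) K) * (f j : MvPolynomial (Vars n) K)
          ∈ idealL K n ^ 3 := by
        rw [hs i, hs j, ← hsij]
        rcases s i with t | t
        · exact mem_cube (L_a6 K n) (L_a6 K n) (L_sb K n t) (vy K n t ^ 3) _
            (by rw [hq]; simp only [Sum.elim_inl]; ring)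
        · exact mem_cube (L_b6 K n) (L_b6 K n) (L_sa K n t) (vx K n t ^ 3) _
            (by rw [hq]; simp only [Sum.elim_inr]; ring)
      have h3 := Ideal.mul_mem_mul hc h2
      rw [← pow_add] at h3
      have hcard : 2 ≤ r := by
        have h4 := i.2
        have h5 := j.2
        have h6 : (i : ℕ) ≠ j := fun h => hij (Fin.ext h)
        omega
      convert h3 using 2
      omega
  exact hle hz

theorem powI_eq (k : ℕ) (hk : 2 * n + 1 < k) : idealI K n ^ k = idealL K n ^ k := by
  set q := va K n ^ 4 * vb K n ^ 4 with hq
  set L := idealL K n with hL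
  apply le_antisymm
  · have h1 : idealI K n ≤ L ⊔ Ideal.span {q} := by
      have hL' : L ≤ L ⊔ Ideal.span {q} := le_sup_left
      have hq' : q ∈ L ⊔ Ideal.span {q} :=
        (le_sup_right : _ ≤ L ⊔ Ideal.span {q}) (Ideal.mem_span_singleton_self q)
      refine Ideal.span_le.2 ?_
      rintro g ((h | ⟨i, rfl⟩) | ⟨i, rfl⟩)
      · simp only [Set.mem_insert_iff, Set.mem_singleton_iff] at h
        rcases h with rfl | rfl | rfl | rfl | rfl | rfl
        · exact hL' (L_a6 K n)
        · exact hL' (L_a5b K n)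
        · exact hL' (L_ab5 K n)
        · exact hL' (L_b6 K n)
        · exact Ideal.mul_mem_right _ _ hq'
        · exact Ideal.mul_mem_right _ _ hq'
      · exact hL' (L_sa K n i)
      · exact hL' (L_sb K n i)
    have hqq : Ideal.span {q} * Ideal.span {q} ≤ L ^ 2 := by
      rw [Ideal.span_singleton_mul_span_singleton, Ideal.span_singleton_le_iff_mem]
      exact mem_sq (L_a6 K n) (L_b6 K n) (va K n ^ 2 * vb K n ^ 2) _ (by rw [hq]; ring)
    have h2 : ∀ r : ℕ, (L ⊔ Ideal.span {q}) ^ (r + 1) ≤ L ^ (r + 1) ⊔ Ideal.span {q} * L ^ r := by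
      intro r
      induction r with
      | zero => simp
      | succ r ih =>
        rw [pow_succ]
        refine (Ideal.mul_mono_left ih).trans ?_
        rw [Ideal.sup_mul, Ideal.mul_sup, Ideal.mul_sup]
        refine sup_le (sup_le ?_ ?_) (sup_le ?_ ?_)
        · rw [← pow_succ]; exact le_sup_left
        · rw [mul_comm]; exact le_sup_right
        · rw [mul_assoc, ← pow_succ]; exact le_sup_right
        · rw [mul_right_comm]
          refine (Ideal.mul_mono_left hqq).trans ?_
          rw [← pow_add, show 2 + r = r + 1 + 1 by omega]; exact le_sup_left
    obtain ⟨r, rfl⟩ : ∃ r, k = r + 1 := ⟨k - 1, by omega⟩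
    refine (Ideal.pow_right_mono h1 _).trans ((h2 r).trans (sup_le le_rfl ?_))
    rw [Ideal.span_singleton_mul_le_iff]
    intro z hz
    exact q_mul_mem K n r (by omega) z hz
  · refine Ideal.pow_right_mono (Ideal.span_mono ?_) _
    rintro g ((h | h) | h)
    · left; left
      rcases h with h | h | h | h
      · exact Or.inl h
      · exact Or.inr (Or.inl h)
      · exact Or.inr (Or.inr (Or.inl h))
      · exact Or.inr (Or.inr (Or.inr (Or.inl h)))
    · exact Or.inl (Or.inr h)
    · exact Or.inr h

/-- A superadditive weight. -/
def nu (t : Vars n →₀ ℕ) : ℕ :=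
  t (Sum.inl 0) + t (Sum.inl 1) +
    2 * ∑ i : Fin n, (t (Sum.inr (Sum.inl i)) + t (Sum.inr (Sum.inr i))) / 3

theorem nu_add (s t : Vars n →₀ ℕ) : nu n s + nu n t ≤ nu n (s + t) := by
  have h : ∑ i : Fin n, (s (Sum.inr (Sum.inl i)) + s (Sum.inr (Sum.inr i))) / 3 +
      ∑ i : Fin n, (t (Sum.inr (Sum.inl i)) + t (Sum.inr (Sum.inr i))) / 3 ≤
      ∑ i : Fin n, ((s + t) (Sum.inr (Sum.inl i)) + (s + t) (Sum.inr (Sum.inr i))) / 3 := by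
    rw [← Finset.sum_add_distrib]
    refine Finset.sum_le_sum fun i _ => ?_
    simp only [Finsupp.add_apply]
    omega
  simp only [nu, Finsupp.add_apply] at h ⊢
  omega

theorem nu_mono {s t : Vars n →₀ ℕ} (h : s ≤ t) : nu n s ≤ nu n t := by
  obtain ⟨r, rfl⟩ := exists_add_of_le h
  exact le_trans (Nat.le_add_right _ _) (nu_add n s r)

theorem le_nu_of_term (t : Vars n →₀ ℕ) (i : Fin n) :
    t (Sum.inl 0) + t (Sum.inl 1) +
      2 * ((t (Sum.inr (Sum.inl i)) + t (Sum.inr (Sum.inr i))) / 3) ≤ nu n t := by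
  have := Finset.single_le_sum
    (f := fun i : Fin n => (t (Sum.inr (Sum.inl i)) + t (Sum.inr (Sum.inr i))) / 3)
    (fun _ _ => Nat.zero_le _) (Finset.mem_univ i)
  simp only [nu] at this ⊢
  omega

theorem genL_monomial (g : MvPolynomial (Vars n) K) (hg : g ∈ genL K n) :
    ∃ t : Vars n →₀ ℕ, g = monomial t 1 ∧ t (Sum.inl 2) = 0 ∧ t (Sum.inl 3) = 0 ∧ 6 ≤ nu n t := by
  rcases hg with (h | ⟨i, rfl⟩) | ⟨i, rfl⟩
  · simp only [Set.mem_insert_iff, Set.mem_singleton_iff] at h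
    have key : ∀ p r : ℕ, 6 ≤ p + r → g = va K n ^ p * vb K n ^ r →
      ∃ t : Vars n →₀ ℕ, g = monomial t 1 ∧ t (Sum.inl 2) = 0 ∧ t (Sum.inl 3) = 0 ∧
        6 ≤ nu n t := by
      intro p r hpr hg
      refine ⟨Finsupp.single (Sum.inl 0) p + Finsupp.single (Sum.inl 1) r, ?_, ?_, ?_, ?_⟩
      · rw [hg, va, vb, X_pow_eq_monomial, X_pow_eq_monomial, monomial_mul, one_mul]
      · simp
      · simp
      · simp [nu]
        omega
    rcases h with h | h | h | h
    · exact key 6 0 (by omega) (by rw [h]; ring)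
    · exact key 5 1 (by omega) (by rw [h]; ring)
    · exact key 1 5 (by omega) (by rw [h]; ring)
    · exact key 0 6 (by omega) (by rw [h]; ring)
  · refine ⟨Finsupp.single (Sum.inl 0) 4 + Finsupp.single (Sum.inr (Sum.inl i)) 1 +
      Finsupp.single (Sum.inr (Sum.inr i)) 2, ?_, by simp, by simp, ?_⟩
    · simp only [va, vx, vy, X_pow_eq_monomial]
      simp only [X, monomial_mul, one_mul]
    · refine le_trans ?_ (le_nu_of_term n _ i)
      simp
  · refine ⟨Finsupp.single (Sum.inl 1) 4 + Finsupp.single (Sum.inr (Sum.inl i)) 2 +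
      Finsupp.single (Sum.inr (Sum.inr i)) 1, ?_, by simp, by simp, ?_⟩
    · simp only [vb, vx, vy, X_pow_eq_monomial]
      simp only [X, monomial_mul, one_mul]
    · refine le_trans ?_ (le_nu_of_term n _ i)
      simp

theorem L_pow_monomial (k : ℕ) : ∃ U : Set (Vars n →₀ ℕ),
    idealL K n ^ k = Ideal.span ((fun s => monomial s (1 : K)) '' U) ∧
    ∀ t ∈ U, t (Sum.inl 2) = 0 ∧ t (Sum.inl 3) = 0 ∧ 6 * k ≤ nu n t := by
  induction k with
  | zero =>
    refine ⟨{0}, ?_, ?_⟩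
    · rw [pow_zero, Set.image_singleton, Ideal.one_eq_top]
      symm
      rw [Ideal.eq_top_iff_one]
      exact Ideal.subset_span (by simp)
    · rintro t rfl
      simp
  | succ k ih =>
    obtain ⟨U, hU, hU'⟩ := ih
    refine ⟨{t | ∃ u ∈ U, ∃ v : Vars n →₀ ℕ, monomial v (1 : K) ∈ genL K n ∧
      v (Sum.inl 2) = 0 ∧ v (Sum.inl 3) = 0 ∧ 6 ≤ nu n v ∧ t = u + v}, ?_, ?_⟩
    · rw [pow_succ, hU, idealL, Ideal.span_mul_span']
      congr 1
      ext g
      constructor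
      · rintro ⟨_, ⟨u, hu, rfl⟩, g, hg, rfl⟩
        obtain ⟨v, rfl, h1, h2, h3⟩ := genL_monomial K n g hg
        exact ⟨u + v, ⟨u, hu, v, hg, h1, h2, h3, rfl⟩, by simp [monomial_mul]⟩
      · rintro ⟨_, ⟨u, hu, v, hg, h1, h2, h3, rfl⟩, rfl⟩
        exact ⟨_, ⟨u, hu, rfl⟩, _, hg, by simp [monomial_mul]⟩
    · rintro t ⟨u, hu, v, hg, h1, h2, h3, rfl⟩
      obtain ⟨h4, h5, h6⟩ := hU' u hu
      refine ⟨by simp [h1, h4], by simp [h2, h5], ?_⟩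
      have := nu_add n u v
      omega

theorem X_mul_mem_span {σ : Type*} (T : Set (σ →₀ ℕ)) (v : σ) (hT : ∀ t ∈ T, t v = 0)
    (f : MvPolynomial σ K) (h : X v * f ∈ Ideal.span ((fun s => monomial s (1 : K)) '' T)) :
    f ∈ Ideal.span ((fun s => monomial s (1 : K)) '' T) := by
  classical
  rw [mem_ideal_span_monomial_image] at h ⊢
  intro m hm
  obtain ⟨t, ht, hle⟩ := h (Finsupp.single v 1 + m) (by
    rw [mem_support_iff, coeff_X_mul]
    exact mem_support_iff.1 hm)
  refine ⟨t, ht, fun w => ?_⟩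
  by_cases hw : w = v
  · subst hw
    rw [hT t ht]
    exact Nat.zero_le _
  · have := hle w
    simpa [Finsupp.single_apply, Ne.symm hw] using this

theorem mem_mMax_iff (f : MvPolynomial (Vars n) K) : f ∈ mMax K n ↔ coeff 0 f = 0 := by
  have := mem_pow_idealOfVars_iff' (σ := Vars n) (R := K) 1 f
  rw [pow_one] at this
  change f ∈ idealOfVars (Vars n) K ↔ _
  rw [this]
  constructor
  · intro h
    exact h 0 (by simp)
  · intro h x hx
    have : x = 0 := by
      rw [← Finsupp.degree_eq_zero_iff]
      omega
    rw [this, h]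

instance mMax_prime : (mMax K n).IsPrime := by
  have : mMax K n = RingHom.ker (constantCoeff : MvPolynomial (Vars n) K →+* K) := by
    ext f
    rw [mem_mMax_iff, RingHom.mem_ker, constantCoeff_eq]
  rw [this]
  exact RingHom.ker_isPrime _

theorem L_pow_le (k : ℕ) (hk : k ≠ 0) : idealL K n ^ k ≤ mMax K n := by
  refine (Ideal.pow_le_self hk).trans (Ideal.span_le.2 ?_)
  intro g hg
  obtain ⟨t, rfl, -, -, h⟩ := genL_monomial K n g hg
  change _ ∈ mMax K n
  rw [mem_mMax_iff, coeff_monomial, if_neg]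
  rintro rfl
  simp [nu] at h

open Pointwise in
theorem cd_regular (k : ℕ) (hk : k ≠ 0) :
    RingTheory.Sequence.IsRegular (MvPolynomial (Vars n) K ⧸ idealL K n ^ k)
      [vc K n, vd K n] := by
  obtain ⟨U, hU, hU'⟩ := L_pow_monomial K n k
  constructor
  · rw [RingTheory.Sequence.isWeaklyRegular_cons_iff,
      RingTheory.Sequence.isWeaklyRegular_cons_iff]
    refine ⟨?_, ?_, RingTheory.Sequence.IsWeaklyRegular.nil _ _⟩
    · refine (isSMulRegular_quotient_iff_mem_of_smul_mem _ _).2 ?_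
      intro f hf
      rw [hU] at hf ⊢
      exact X_mul_mem_span K U (Sum.inl 2) (fun t ht => (hU' t ht).1) f hf
    · refine (isSMulRegular_quotient_iff_mem_of_smul_mem _ _).2 ?_
      intro x hx
      obtain ⟨f, rfl⟩ := Submodule.mkQ_surjective _ x
      have hiff : ∀ f : MvPolynomial (Vars n) K,
          Submodule.mkQ (idealL K n ^ k) f ∈
            vc K n • (⊤ : Submodule (MvPolynomial (Vars n) K)
              (MvPolynomial (Vars n) K ⧸ idealL K n ^ k)) ↔
          f ∈ Ideal.span ((fun s => monomial s (1 : K)) '' (U ∪ {Finsupp.single (Sum.inl 2) 1})) := by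
        intro f
        rw [Set.image_union, Ideal.span_union, ← hU, Set.image_singleton]
        rw [Submodule.mem_smul_pointwise_iff_exists]
        change _ ↔ f ∈ _ ⊔ Ideal.span {vc K n}
        constructor
        · rintro ⟨y, -, hy⟩
          obtain ⟨g, rfl⟩ := Submodule.mkQ_surjective _ y
          rw [← map_smul, ← sub_eq_zero, ← map_sub, Submodule.mkQ_apply,
            Submodule.Quotient.mk_eq_zero] at hy
          have : f = -(vc K n • g - f) + vc K n * g := by
            rw [smul_eq_mul]; ring
          rw [this]
          exact Submodule.add_mem_sup (neg_mem hy)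
            (Ideal.mul_mem_right _ _ (Ideal.mem_span_singleton_self _))
        · intro h
          obtain ⟨y, hy, z, hz, rfl⟩ := Submodule.mem_sup.1 h
          obtain ⟨g, rfl⟩ := Ideal.mem_span_singleton.1 hz
          refine ⟨Submodule.mkQ _ g, trivial, ?_⟩
          rw [map_add, Submodule.mkQ_apply _ y, (Submodule.Quotient.mk_eq_zero _).2 hy, ← map_smul, zero_add, smul_eq_mul]
      rw [← map_smul, hiff] at hx
      rw [hiff]
      refine X_mul_mem_span K _ (Sum.inl 3) ?_ f hx
      rintro t (ht | rfl)
      · exact (hU' t ht).2.1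
      · simp
  · intro h
    have h1 : Ideal.ofList [vc K n, vd K n] • (⊤ : Submodule (MvPolynomial (Vars n) K)
        (MvPolynomial (Vars n) K ⧸ idealL K n ^ k)) ≤
        Submodule.map (Submodule.mkQ _) (mMax K n) := by
      refine Submodule.smul_le.2 ?_
      intro r hr y _
      obtain ⟨g, rfl⟩ := Submodule.mkQ_surjective _ y
      rw [← map_smul]
      refine Submodule.mem_map_of_mem (Ideal.mul_mem_right _ _ ?_)
      have : Ideal.ofList [vc K n, vd K n] ≤ mMax K n := by
        refine Ideal.span_le.2 ?_
        intro r hr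
        simp only [List.mem_cons, List.not_mem_nil, or_false] at hr
        rcases hr with rfl | rfl
        · exact Ideal.subset_span ⟨_, rfl⟩
        · exact Ideal.subset_span ⟨_, rfl⟩
      exact this hr
    rw [← h] at h1
    have h2 : Submodule.mkQ (idealL K n ^ k) 1 ∈ Submodule.map (Submodule.mkQ _) (mMax K n) :=
      h1 trivial
    obtain ⟨g, hg, hg'⟩ := h2
    rw [← sub_eq_zero, ← map_sub, Submodule.mkQ_apply, Submodule.Quotient.mk_eq_zero] at hg'
    have h3 : (1 : MvPolynomial (Vars n) K) ∈ mMax K n := by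
      have := sub_mem hg (L_pow_le K n k hk hg')
      simpa using this
    exact (mMax_prime K n).ne_top ((Ideal.eq_top_iff_one _).2 h3)

/-- Exponent of the socle monomial. -/
def muExp (p : ℕ) : Vars n →₀ ℕ :=
  Finsupp.equivFunOnFinite.symm
    (Sum.elim ![p, 5, 0, 0] (Sum.elim (fun _ => 2) (fun _ => 3)))

theorem nu_muExp (p : ℕ) : nu n (muExp n p) = p + 5 + 2 * n := by
  simp [nu, muExp]

theorem monomial_muExp (j : ℕ) : monomial (muExp n (4 * n + 6 * j + 6)) (1 : K) =
    (∏ i, (va K n ^ 4 * vx K n i * vy K n i ^ 2)) * (∏ i, (vx K n i * vy K n i)) *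
      va K n ^ (6 * j + 6) * vb K n ^ 5 := by
  rw [monomial_eq, Finsupp.prod_fintype _ _ (by simp), Fintype.prod_sum_type,
    Fintype.prod_sum_type, Fin.prod_univ_four]
  simp only [muExp, Finsupp.equivFunOnFinite_symm_apply_apply, Sum.elim_inl, Sum.elim_inr,
    Finset.prod_mul_distrib, Finset.prod_const, Finset.card_univ, Fintype.card_fin,
    Finset.prod_pow]
  simp only [va, vb, vx, vy, Matrix.cons_val, C_1]
  ring

theorem socle_mem (j : ℕ) (v : Vars n) (h2 : v ≠ Sum.inl 2) (h3 : v ≠ Sum.inl 3) :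
    X v * monomial (muExp n (4 * n + 6 * j + 6)) (1 : K) ∈ idealL K n ^ (n + 2 + j) := by
  classical
  rw [monomial_muExp]
  set A := ∏ i, (va K n ^ 4 * vx K n i * vy K n i ^ 2) with hA
  have hAm : A ∈ idealL K n ^ n := by
    have := prod_mem_pow_card (Finset.univ : Finset (Fin n)) _ (fun i _ => L_sa K n i)
    simpa using this
  have ha : ∀ r, (va K n ^ 6) ^ r ∈ idealL K n ^ r := fun r => Ideal.pow_mem_pow (L_a6 K n) r
  have key : ∀ (r s : ℕ) (z w y : MvPolynomial (Vars n) K), n + s + r = n + 2 + j →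
      z ∈ idealL K n ^ s → y = A * z * (va K n ^ 6) ^ r * w →
      y ∈ idealL K n ^ (n + 2 + j) := by
    intro r s z w y hrs hz hy
    rw [hy, ← hrs, pow_add, pow_add]
    exact Ideal.mul_mem_right _ _ (Ideal.mul_mem_mul (Ideal.mul_mem_mul hAm hz) (ha r))
  rcases v with v | i | i
  · fin_cases v
    · refine key (j + 1) 1 (va K n * vb K n ^ 5) (∏ i, (vx K n i * vy K n i)) _ (by omega)
        (by rw [pow_one]; exact L_ab5 K n) ?_
      change va K n * _ = _
      ring
    · refine key (j + 1) 1 (vb K n ^ 6) (∏ i, (vx K n i * vy K n i)) _ (by omega)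
        (by rw [pow_one]; exact L_b6 K n) ?_
      change vb K n * _ = _
      ring
    · exact absurd rfl h2
    · exact absurd rfl h3
  · rw [← Finset.mul_prod_erase Finset.univ (fun i => vx K n i * vy K n i) (Finset.mem_univ i)]
    refine key (j + 1) 1 (vb K n ^ 4 * vx K n i ^ 2 * vy K n i)
      (vb K n * ∏ i ∈ Finset.univ.erase i, (vx K n i * vy K n i)) _ (by omega)
        (by rw [pow_one]; exact L_sb K n i) ?_
    change vx K n i * _ = _
    ring
  · rw [← Finset.mul_prod_erase Finset.univ (fun i => vx K n i * vy K n i) (Finset.mem_univ i)]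
    refine key j 2 ((va K n ^ 4 * vx K n i * vy K n i ^ 2) * (va K n * vb K n ^ 5))
      (va K n * ∏ i ∈ Finset.univ.erase i, (vx K n i * vy K n i)) _ (by omega)
        (mem_sq (L_sa K n i) (L_ab5 K n) 1 _ (by ring)) ?_
    change vy K n i * _ = _
    ring

/-- The ideal of all variables but `c, d`. -/
def idealP : Ideal (MvPolynomial (Vars n) K) :=
  Ideal.span (X '' {v | v ≠ Sum.inl 2 ∧ v ≠ Sum.inl 3})

theorem dim_P : ringKrullDim (MvPolynomial (Vars n) K ⧸ idealP K n) ≤ 2 := by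
  let g : MvPolynomial (Fin 2) K →ₐ[K] (MvPolynomial (Vars n) K ⧸ idealP K n) :=
    aeval ![Ideal.Quotient.mk _ (vc K n), Ideal.Quotient.mk _ (vd K n)]
  have hX : ∀ v, Ideal.Quotient.mk (idealP K n) (X v) ∈ g.range := by
    intro v
    by_cases h2 : v = Sum.inl 2
    · subst h2
      exact ⟨X 0, by simp [g, vc]⟩
    by_cases h3 : v = Sum.inl 3
    · subst h3
      exact ⟨X 1, by simp [g, vd]⟩
    have : Ideal.Quotient.mk (idealP K n) (X v) = 0 :=
      Ideal.Quotient.eq_zero_iff_mem.2 (Ideal.subset_span ⟨v, ⟨h2, h3⟩, rfl⟩)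
    rw [this]
    exact zero_mem _
  have hsurj : Function.Surjective g := by
    intro y
    obtain ⟨f, rfl⟩ := Ideal.Quotient.mk_surjective y
    change Ideal.Quotient.mk (idealP K n) f ∈ g.range
    induction f using MvPolynomial.induction_on with
    | C a => exact g.range.algebraMap_mem a
    | add p q hp hq => rw [map_add]; exact add_mem hp hq
    | mul_X p v hp => rw [map_mul]; exact mul_mem hp (hX v)
  refine (ringKrullDim_le_of_surjective g.toRingHom hsurj).trans ?_
  rw [MvPolynomial.ringKrullDim_of_isNoetherianRing]
  simp

/-- For every integer `k > 2n+1`, the depth of `S/Iᵏ` equals `2`. -/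
theorem depth_eq_two_of_large (k : ℕ) (hk : 2 * n + 1 < k) :
    depthWrt (mMax K n) (MvPolynomial (Vars n) K ⧸ (idealI K n) ^ k) = 2 := by
  rw [powI_eq K n k hk]
  apply le_antisymm
  · refine sSup_le ?_
    rintro _ ⟨rs, rfl, hrs, hreg⟩
    obtain ⟨j, rfl⟩ : ∃ j, k = n + 2 + j := ⟨k - n - 2, by omega⟩
    set u : MvPolynomial (Vars n) K := monomial (muExp n (4 * n + 6 * j + 6)) (1 : K) with hu
    have h := length_le_dim (mMax K n) rs (idealP K n)
      (Submodule.mkQ (idealL K n ^ (n + 2 + j)) u) ?_ ?_ hrs hreg.toIsWeaklyRegular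
    · have h2 := h.trans (dim_P K n)
      exact WithBot.coe_le_coe.1 h2
    · have hle : idealP K n ≤ Submodule.comap
          (LinearMap.mulRight (MvPolynomial (Vars n) K) u) (idealL K n ^ (n + 2 + j)) := by
        refine Ideal.span_le.2 ?_
        rintro _ ⟨v, ⟨hv2, hv3⟩, rfl⟩
        exact socle_mem K n j v hv2 hv3
      intro r hr
      rw [← map_smul, Submodule.mkQ_apply, Submodule.Quotient.mk_eq_zero]
      exact hle hr
    · intro r hr
      rw [← map_smul, Submodule.mkQ_apply, Submodule.Quotient.mk_eq_zero, smul_eq_mul] at hr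
      rw [mem_mMax_iff]
      by_contra hne
      obtain ⟨U, hU, hU'⟩ := L_pow_monomial K n (n + 2 + j)
      rw [hU, mem_ideal_span_monomial_image] at hr
      obtain ⟨t, ht, hle⟩ := hr (muExp n (4 * n + 6 * j + 6)) (by
        rw [mem_support_iff, hu]
        have := coeff_mul_monomial 0 (muExp n (4 * n + 6 * j + 6)) (1 : K) r
        rw [zero_add, mul_one] at this
        rwa [this])
      have h1 := nu_mono n hle
      rw [nu_muExp] at h1
      have h2 := (hU' t ht).2.2
      omega
  · refine le_sSup ⟨[vc K n, vd K n], by simp, ?_, cd_regular K n k (by omega)⟩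
    intro r hr
    simp only [List.mem_cons, List.not_mem_nil, or_false] at hr
    rcases hr with rfl | rfl
    · exact Ideal.subset_span ⟨_, rfl⟩
    · exact Ideal.subset_span ⟨_, rfl⟩
end
end
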